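/- Let W be a d-dimensional rational linear subspace of ℝⁿ, let {q₁,…,q_d} be a ℤ-basis of W ∩ ℤⁿ, let ι : ℝᵈ → ℝⁿ, (c₁,…,c_d) ↦ c₁q₁ + ⋯ + c_d q_d, and let ι* : 𝕋[x₁^±,…,xₙ^±]_fcn → 𝕋[y₁^±,…,y_d^±]_fcn be the pull-back f ↦ f ∘ ι. Let Z ⊆ W be any subset. Then the push-forward congruence (ι*)_*(E(Z)), defined as the smallest congruence on 𝕋[y₁^±,…,y_d^±]_fcn containing {(f ∘ ι, g ∘ ι) : (f,g) ∈ E(Z)}, equals E(ι⁻¹(Z)). -/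

import Mathlib

/-! Every tropical Laurent polynomial function on `ℝᵈ` is of the form `F ∘ ι` (`IsTropFcn.lift`).
Indeed `W ∩ ℤⁿ` is a saturated sublattice of `ℤⁿ`, so `ℤⁿ / (W ∩ ℤⁿ)` is finitely generated and
torsion-free, hence free, and the inclusion `ℤᵈ → ℤⁿ` given by `q` has a `ℤ`-linear left inverse
(`exists_leftInverse_of_saturated`). Dually, every exponent `u ∈ ℤᵈ` is the restriction
`(v · qᵢ)ᵢ` of some exponent `v ∈ ℤⁿ` (`exists_exponent_lift`), and so every monomial on `ℝᵈ`
lifts to `ℝⁿ`.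

If `f` and `g` agree on `ι⁻¹(Z)`, then their lifts `F` and `G` agree on `Z`, because
`Z ⊆ W = ι(ℝᵈ)`; hence `(f, g)` already is one of the generators. Conversely, `𝐄(ι⁻¹(Z))` is a
congruence that contains all the generators. -/

noncomputable section

/-- The tropical semifield `𝕋 = ℝ ∪ {-∞}`, with tropical addition `⊔` (max) and
tropical multiplication `+`. -/
abbrev Trop : Type := WithBot ℝ

/-- `𝕋`-valued functions on `ℝⁿ`. -/
abbrev TropFn (n : ℕ) : Type := (Fin n → ℝ) → Trop

/-- `f` is a tropical Laurent polynomial function: it is the pointwise maximum of finitely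
many affine terms `p ↦ c + u·p` with `c ∈ ℝ` and `u ∈ ℤⁿ` (terms with coefficient `-∞` are
ignored, so we may take all coefficients real; the empty maximum is the constant `-∞`). -/
def IsTropFcn {n : ℕ} (f : TropFn n) : Prop :=
  ∃ A : Finset (ℝ × (Fin n → ℤ)),
    ∀ p, f p = A.sup fun t => ((t.1 + ∑ i, (t.2 i : ℝ) * p i : ℝ) : Trop)

/-- A congruence on the semiring `𝕋[x₁^±,…,xₙ^±]_fcn` of tropical Laurent polynomial
functions: an equivalence relation on the set of tropical Laurent polynomial functions that
is compatible with the semiring addition (pointwise `⊔`) and multiplication (pointwise `+`). -/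
structure IsTropCongruence (n : ℕ) (E : Set (TropFn n × TropFn n)) : Prop where
  mem_left : ∀ ⦃f g : TropFn n⦄, (f, g) ∈ E → IsTropFcn f
  mem_right : ∀ ⦃f g : TropFn n⦄, (f, g) ∈ E → IsTropFcn g
  refl : ∀ ⦃f : TropFn n⦄, IsTropFcn f → (f, f) ∈ E
  symm : ∀ ⦃f g : TropFn n⦄, (f, g) ∈ E → (g, f) ∈ E
  trans : ∀ ⦃f g h : TropFn n⦄, (f, g) ∈ E → (g, h) ∈ E → (f, h) ∈ E
  add_compat : ∀ ⦃f₁ g₁ f₂ g₂ : TropFn n⦄,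
    (f₁, g₁) ∈ E → (f₂, g₂) ∈ E → (f₁ ⊔ f₂, g₁ ⊔ g₂) ∈ E
  mul_compat : ∀ ⦃f₁ g₁ f₂ g₂ : TropFn n⦄,
    (f₁, g₁) ∈ E → (f₂, g₂) ∈ E → (f₁ + f₂, g₁ + g₂) ∈ E

/-- `⟨S⟩`: the smallest congruence containing `S`. -/
def congGen (n : ℕ) (S : Set (TropFn n × TropFn n)) : Set (TropFn n × TropFn n) :=
  ⋂₀ {E | IsTropCongruence n E ∧ S ⊆ E}

/-- `𝐄(Z)`: the congruence of pairs of tropical Laurent polynomial functions agreeing on `Z`. -/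
def Econg (n : ℕ) (Z : Set (Fin n → ℝ)) : Set (TropFn n × TropFn n) :=
  {fg | IsTropFcn fg.1 ∧ IsTropFcn fg.2 ∧ ∀ p ∈ Z, fg.1 p = fg.2 p}

theorem IsTropFcn.sup {n : ℕ} {f g : TropFn n} (hf : IsTropFcn f) (hg : IsTropFcn g) :
    IsTropFcn (f ⊔ g) := by
  classical
  obtain ⟨A, hA⟩ := hf
  obtain ⟨B, hB⟩ := hg
  exact ⟨A ∪ B, fun p => by rw [Finset.sup_union, ← hA, ← hB, Pi.sup_apply]⟩

theorem trop_sup_add {α : Type*} (A : Finset α) (φ : α → Trop) (x : Trop) :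
    A.sup φ + x = A.sup fun a => φ a + x :=
  Finset.apply_sup_eq_sup_comp (fun y => y + x)
    (fun a b => (max_add_add_right a b x).symm) (WithBot.bot_add x)

theorem trop_add_sup {α : Type*} (A : Finset α) (φ : α → Trop) (x : Trop) :
    x + A.sup φ = A.sup fun a => x + φ a := by
  simp only [add_comm x, trop_sup_add]

theorem IsTropFcn.add {n : ℕ} {f g : TropFn n} (hf : IsTropFcn f) (hg : IsTropFcn g) :
    IsTropFcn (f + g) := by
  classical
  obtain ⟨A, hA⟩ := hf
  obtain ⟨B, hB⟩ := hg
  refine ⟨(A ×ˢ B).image fun t => (t.1.1 + t.2.1, t.1.2 + t.2.2), fun p => ?_⟩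
  rw [Pi.add_apply, hA, hB, trop_sup_add, Finset.sup_image, Finset.sup_product_left]
  refine Finset.sup_congr rfl fun a _ => ?_
  rw [trop_add_sup]
  refine Finset.sup_congr rfl fun b _ => ?_
  simp only [Function.comp_apply, ← WithBot.coe_add, WithBot.coe_inj, Pi.add_apply, Int.cast_add,
    add_mul, Finset.sum_add_distrib]
  ring

theorem isTropCongruence_Econg (n : ℕ) (Z : Set (Fin n → ℝ)) :
    IsTropCongruence n (Econg n Z) where
  mem_left _ _ h := h.1
  mem_right _ _ h := h.2.1
  refl _ h := ⟨h, h, fun _ _ => rfl⟩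
  symm _ _ h := ⟨h.2.1, h.1, fun p hp => (h.2.2 p hp).symm⟩
  trans _ _ _ h k := ⟨h.1, k.2.1, fun p hp => (h.2.2 p hp).trans (k.2.2 p hp)⟩
  add_compat _ _ _ _ h k := ⟨h.1.sup k.1, h.2.1.sup k.2.1, fun p hp =>
    congrArg₂ (· ⊔ ·) (h.2.2 p hp) (k.2.2 p hp)⟩
  mul_compat _ _ _ _ h k := ⟨h.1.add k.1, h.2.1.add k.2.1, fun p hp =>
    congrArg₂ (· + ·) (h.2.2 p hp) (k.2.2 p hp)⟩

/-- The pairing of an exponent with a point `ι p`: pulling back along `ι` sends the exponent `v`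
to `(v · qᵢ)ᵢ`. -/
theorem pairing_pullback {n d : ℕ} (q : Fin d → (Fin n → ℤ)) (v : Fin n → ℤ) (p : Fin d → ℝ) :
    ∑ j, (v j : ℝ) * (∑ i, p i • (fun j => (q i j : ℝ)) : Fin n → ℝ) j =
      ∑ i, ((∑ j, v j * q i j : ℤ) : ℝ) * p i := by
  simp only [Finset.sum_apply, Pi.smul_apply, smul_eq_mul, Finset.mul_sum, Int.cast_sum,
    Int.cast_mul, Finset.sum_mul]
  rw [Finset.sum_comm]
  exact Finset.sum_congr rfl fun i _ => Finset.sum_congr rfl fun j _ => by ring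

theorem IsTropFcn.pullback {n d : ℕ} {q : Fin d → (Fin n → ℤ)} {ι : (Fin d → ℝ) → (Fin n → ℝ)}
    (hι : ∀ c, ι c = ∑ i, c i • (fun j => (q i j : ℝ))) {F : TropFn n} (hF : IsTropFcn F) :
    IsTropFcn (F ∘ ι) := by
  classical
  obtain ⟨A, hA⟩ := hF
  refine ⟨A.image fun t => (t.1, fun i => ∑ j, t.2 j * q i j), fun p => ?_⟩
  rw [Function.comp_apply, hA, Finset.sup_image]
  refine Finset.sup_congr rfl fun t _ => ?_
  rw [hι, pairing_pullback]
  rfl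

/-- An injective `ℤ`-linear map `ℤᵈ → ℤⁿ` with saturated range splits: the cokernel is finitely
generated and torsion-free, hence free. -/
theorem exists_leftInverse_of_saturated {n d : ℕ} (f : (Fin d → ℤ) →ₗ[ℤ] (Fin n → ℤ))
    (hf : Function.Injective f)
    (hsat : ∀ (k : ℤ) (v : Fin n → ℤ), k ≠ 0 → k • v ∈ LinearMap.range f →
      v ∈ LinearMap.range f) :
    ∃ g : (Fin n → ℤ) →ₗ[ℤ] (Fin d → ℤ), g ∘ₗ f = LinearMap.id := by
  have htf : Module.IsTorsionFree ℤ ((Fin n → ℤ) ⧸ LinearMap.range f) := by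
    refine Module.IsTorsionFree.of_smul_eq_zero fun k x hkx => ?_
    obtain ⟨v, rfl⟩ := Submodule.mkQ_surjective _ x
    rw [← map_smul, Submodule.mkQ_apply, Submodule.Quotient.mk_eq_zero] at hkx
    rw [Submodule.mkQ_apply, Submodule.Quotient.mk_eq_zero]
    exact or_iff_not_imp_left.2 fun hk => hsat k v hk hkx
  have hfree : Module.Free ℤ ((Fin n → ℤ) ⧸ LinearMap.range f) := inferInstance
  obtain ⟨s, hs⟩ := Module.projective_lifting_property (LinearMap.range f).mkQ LinearMap.id
    (Submodule.mkQ_surjective _)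
  have hexact : Function.Exact f (LinearMap.range f).mkQ :=
    LinearMap.exact_map_mkQ_range f
  have hsplit := hexact.split_tfae'.out 0 1
  exact (hsplit.1 ⟨hf, s, hs⟩).2

/-- Every exponent `u ∈ ℤᵈ` comes from an exponent `v ∈ ℤⁿ`. If `g` is a left inverse of
`c ↦ ∑ cᵢ qᵢ`, then `v` represents the functional `w ↦ u · g w`. -/
theorem exists_exponent_lift {n d : ℕ} (W : Submodule ℝ (Fin n → ℝ)) (q : Fin d → (Fin n → ℤ))
    (hqW : ∀ i, (fun j => (q i j : ℝ)) ∈ W)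
    (hbasis : ∀ v : Fin n → ℤ, (fun j => (v j : ℝ)) ∈ W →
      ∃! c : Fin d → ℤ, v = ∑ i, c i • q i) (u : Fin d → ℤ) :
    ∃ v : Fin n → ℤ, ∀ i, ∑ j, v j * q i j = u i := by
  classical
  have hW : ∀ c : Fin d → ℤ, (fun j => (((∑ i, c i • q i : Fin n → ℤ) j : ℤ) : ℝ)) ∈ W := by
    intro c
    have h : (fun j => (((∑ i, c i • q i : Fin n → ℤ) j : ℤ) : ℝ)) =
        ∑ i, (c i : ℝ) • (fun j => (q i j : ℝ)) := by
      ext j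
      simp [Finset.sum_apply]
    rw [h]
    exact W.sum_mem fun i _ => W.smul_mem _ (hqW i)
  let f : (Fin d → ℤ) →ₗ[ℤ] (Fin n → ℤ) := Fintype.linearCombination ℤ q
  have hfa : ∀ c, f c = ∑ i, c i • q i := Fintype.linearCombination_apply ℤ q
  have hinj : Function.Injective f := fun a b hab =>
    (hbasis _ (hW a)).unique rfl (by rw [← hfa, ← hfa, hab])
  have hsat : ∀ (k : ℤ) (v : Fin n → ℤ), k ≠ 0 → k • v ∈ LinearMap.range f →
      v ∈ LinearMap.range f := by
    rintro k v hk ⟨c, hc⟩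
    have hk' : (k : ℝ) ≠ 0 := Int.cast_ne_zero.2 hk
    have hv : (fun j => (v j : ℝ)) ∈ W := by
      have h := W.smul_mem (k : ℝ)⁻¹ (hW c)
      rw [← hfa, hc] at h
      convert h using 1
      ext j
      simp [hk']
    obtain ⟨c', hc', -⟩ := hbasis v hv
    exact ⟨c', by rw [hfa, ← hc']⟩
  obtain ⟨g, hg⟩ := exists_leftInverse_of_saturated f hinj hsat
  refine ⟨fun j => ∑ k, u k * g (Pi.single j 1) k, fun i => ?_⟩
  have hgq : g (q i) = Pi.single i 1 := by
    have h := LinearMap.congr_fun hg (Pi.single i 1)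
    simpa [f] using h
  have hexp : ∀ k, ∑ j, g (Pi.single j 1) k * q i j = g (q i) k := by
    intro k
    conv_rhs => rw [LinearMap.pi_apply_eq_sum_univ g (q i)]
    simp only [Finset.sum_apply, Pi.smul_apply, smul_eq_mul]
    refine Finset.sum_congr rfl fun j _ => ?_
    rw [mul_comm]
    have hsingle : (Pi.single j 1 : Fin n → ℤ) = fun l => if j = l then 1 else 0 := by
      ext l
      simp [Pi.single_apply, eq_comm]
    rw [hsingle]
  simp only [Finset.sum_mul, mul_assoc]
  rw [Finset.sum_comm]
  simp only [← Finset.mul_sum, hexp, hgq]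
  simp [Pi.single_apply]

/-- Surjectivity of the pull-back `ι*`. -/
theorem IsTropFcn.lift {n d : ℕ} {q : Fin d → (Fin n → ℤ)} {ι : (Fin d → ℝ) → (Fin n → ℝ)}
    (hι : ∀ c, ι c = ∑ i, c i • (fun j => (q i j : ℝ)))
    (hlift : ∀ u : Fin d → ℤ, ∃ v : Fin n → ℤ, ∀ i, ∑ j, v j * q i j = u i)
    {f : TropFn d} (hf : IsTropFcn f) :
    ∃ F : TropFn n, IsTropFcn F ∧ f = F ∘ ι := by
  classical
  obtain ⟨A, hA⟩ := hf
  choose L hL using hlift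
  refine ⟨_, ⟨A.image fun t => (t.1, L t.2), fun p => rfl⟩, funext fun p => ?_⟩
  rw [Function.comp_apply, hA, Finset.sup_image]
  refine Finset.sup_congr rfl fun t _ => ?_
  rw [Function.comp_apply, hι, pairing_pullback]
  simp only [hL]

/-- `ι` maps onto `W`, since the integer vectors spanning `W` are integer combinations of `q`. -/
theorem subset_range_of_rational {n d : ℕ} (W : Submodule ℝ (Fin n → ℝ))
    (hrat : ∃ s : Set (Fin n → ℤ),
      W = Submodule.span ℝ ((fun u : Fin n → ℤ => fun i => (u i : ℝ)) '' s))
    (q : Fin d → (Fin n → ℤ))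
    (hbasis : ∀ v : Fin n → ℤ, (fun j => (v j : ℝ)) ∈ W →
      ∃! c : Fin d → ℤ, v = ∑ i, c i • q i)
    {ι : (Fin d → ℝ) → (Fin n → ℝ)}
    (hι : ∀ c, ι c = ∑ i, c i • (fun j => (q i j : ℝ))) :
    (W : Set (Fin n → ℝ)) ⊆ Set.range ι := by
  let φ : (Fin d → ℝ) →ₗ[ℝ] (Fin n → ℝ) :=
    Fintype.linearCombination ℝ fun i j => (q i j : ℝ)
  have hφ : ∀ c, φ c = ι c := fun c => by
    rw [hι]
    exact Fintype.linearCombination_apply ℝ _ c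
  have hle : W ≤ LinearMap.range φ := by
    obtain ⟨s, hs⟩ := hrat
    conv_lhs => rw [hs]
    rw [Submodule.span_le]
    rintro _ ⟨u, hu, rfl⟩
    obtain ⟨c, hc, -⟩ := hbasis u (hs ▸ Submodule.subset_span ⟨u, hu, rfl⟩)
    refine ⟨fun i => (c i : ℝ), ?_⟩
    rw [hφ, hι]
    ext j
    simp [hc, Finset.sum_apply]
  intro p hp
  obtain ⟨c, hc⟩ := hle hp
  exact ⟨c, by rw [← hφ, hc]⟩

/-- In the setting of the reduction `ι : ℝᵈ → ℝⁿ` onto a rational linear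
subspace `W`, for any `Z ⊆ W` the push-forward `(ι*)_* (𝐄(Z))`, i.e. the smallest congruence
containing `{(f ∘ ι, g ∘ ι) : (f,g) ∈ 𝐄(Z)}`, equals `𝐄(ι⁻¹(Z))`. -/
theorem stmt11 (n d : ℕ)
    (W : Submodule ℝ (Fin n → ℝ))
    (hrat : ∃ s : Set (Fin n → ℤ),
      W = Submodule.span ℝ ((fun u : Fin n → ℤ => fun i => (u i : ℝ)) '' s))
    (hdim : Module.finrank ℝ W = d)
    (q : Fin d → (Fin n → ℤ))
    (hqW : ∀ i, (fun j => (q i j : ℝ)) ∈ W)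
    (hbasis : ∀ v : Fin n → ℤ, (fun j => (v j : ℝ)) ∈ W →
      ∃! c : Fin d → ℤ, v = ∑ i, c i • q i)
    (ι : (Fin d → ℝ) → (Fin n → ℝ))
    (hι : ∀ c, ι c = ∑ i, c i • (fun j => (q i j : ℝ)))
    (Z : Set (Fin n → ℝ)) (hZ : Z ⊆ (W : Set (Fin n → ℝ))) :
    congGen d {x : TropFn d × TropFn d |
        ∃ fg ∈ Econg n Z, x = (fg.1 ∘ ι, fg.2 ∘ ι)} =
      Econg d (ι ⁻¹' Z) := by
  have hlift := exists_exponent_lift W q hqW hbasis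
  apply Set.Subset.antisymm
  · refine Set.sInter_subset_of_mem ⟨isTropCongruence_Econg d _, ?_⟩
    rintro _ ⟨⟨F, G⟩, ⟨hF, hG, hFG⟩, rfl⟩
    exact ⟨hF.pullback hι, hG.pullback hι, fun p hp => hFG (ι p) hp⟩
  · rintro ⟨f, g⟩ ⟨hf, hg, hfg⟩ E ⟨-, hE⟩
    obtain ⟨F, hF, rfl⟩ := IsTropFcn.lift hι hlift hf
    obtain ⟨G, hG, rfl⟩ := IsTropFcn.lift hι hlift hg
    refine hE ⟨(F, G), ⟨hF, hG, fun p hp => ?_⟩, rfl⟩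
    obtain ⟨c, rfl⟩ := subset_range_of_rational W hrat q hbasis hι (hZ hp)
    exact hfg c hp
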